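/- For the free n-fold free convolution of p δ₀ + (1-p) δ_{1/n} (0<p<1, n ≥ 2), the resulting measure is the free-binomial distribution β(σ,θ) with σ = n(1-p) and θ = np. -/

import Mathlib

open MeasureTheory Set

/-- `x₋` endpoint of the free-binomial continuous part. -/
noncomputable def xminus (σ θ : ℝ) : ℝ :=
  (Real.sqrt (σ / (σ + θ) * (1 - 1 / (σ + θ))) -
    Real.sqrt (1 / (σ + θ) * (1 - σ / (σ + θ)))) ^ 2

/-- `x₊` endpoint of the free-binomial continuous part. -/
noncomputable def xplus (σ θ : ℝ) : ℝ :=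
  (Real.sqrt (σ / (σ + θ) * (1 - 1 / (σ + θ))) +
    Real.sqrt (1 / (σ + θ) * (1 - σ / (σ + θ)))) ^ 2

/-- The free-binomial distribution `β(σ,θ)`:
`(1-σ)1_{0<σ<1} δ₀ + β̃ + (1-θ)1_{0<θ<1} δ₁` with `β̃` having density
`(σ+θ)√((x-x₋)(x₊-x))/(2πx(1-x))` on `(x₋, x₊)`. -/
noncomputable def freeBinomial (σ θ : ℝ) : Measure ℝ :=
  (if 0 < σ ∧ σ < 1 then ENNReal.ofReal (1 - σ) else 0) • Measure.dirac 0 +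
  (if 0 < θ ∧ θ < 1 then ENNReal.ofReal (1 - θ) else 0) • Measure.dirac 1 +
  volume.withDensity (fun x =>
    ENNReal.ofReal (indicator (Ioo (xminus σ θ) (xplus σ θ))
      (fun x => (σ + θ) * Real.sqrt ((x - xminus σ θ) * (xplus σ θ - x)) /
        (2 * Real.pi * x * (1 - x))) x))

/-!
Write `t` for the number of factors. The equation `G_ν(w) = z` is polynomial for the two-point law
`ν`; substituting `t w = ζ + (t - 1) / z` turns it into a quadratic equation for `z` over `ℂ[ζ]`.
It is satisfied by `z = G_μ(ζ)` along the curve `z = -iy`, `y → 0⁺`, hence, by the identity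
theorem, on the whole upper half-plane.

Such a quadratic determines `μ`. Its discriminant gives `|Im G_μ|` at the real line, and Stieltjes
inversion turns this into the density of `μ` away from `{0, 1}`. The masses at `0` and `1` are the
limits of `iε G_μ(α + iε)`, for which the quadratic leaves two candidates; they are told apart by
the sign of `Re G_μ` at the two ends of the support.
-/

open Filter Topology Polynomial
open scoped NNReal

section CauchyTransform

variable {μ : Measure ℝ}

/-- The Cauchy transform `G_μ(ζ) = ∫ (ζ - x)⁻¹ dμ(x)`; up to sign,
this is `resolventTransform`. -/
noncomputable def cauchyTransform (μ : Measure ℝ) (ζ : ℂ) : ℂ :=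
  ∫ x, (ζ - (x : ℂ))⁻¹ ∂μ

lemma cauchyTransform_eq_neg_resolventTransform (μ : Measure ℝ) :
    cauchyTransform μ = -resolventTransform μ := by
  ext ζ
  simp only [cauchyTransform, Pi.neg_apply, resolventTransform_apply, resolvent,
    Ring.inverse_eq_inv', Complex.coe_algebraMap, ← integral_neg, neg_inv, neg_sub]

lemma notMem_image_algebraMap_of_im_ne_zero {ζ : ℂ} (hζ : ζ.im ≠ 0) (s : Set ℝ) :
    ζ ∉ algebraMap ℝ ℂ '' s := by
  rintro ⟨x, -, rfl⟩
  simp at hζ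

lemma norm_inv_sub_ofReal_le {ζ : ℂ} (hζ : ζ.im ≠ 0) (x : ℝ) : ‖(ζ - x)⁻¹‖ ≤ |ζ.im|⁻¹ := by
  rw [norm_inv]
  gcongr
  simpa using Complex.abs_im_le_norm (ζ - x)

lemma inv_sub_ofReal_re (ζ : ℂ) (x : ℝ) :
    (ζ - x)⁻¹.re = (ζ.re - x) / ((ζ.re - x) ^ 2 + ζ.im ^ 2) := by
  simp [Complex.inv_re, Complex.normSq_apply, sq]

lemma inv_sub_ofReal_im (ζ : ℂ) (x : ℝ) :
    (ζ - x)⁻¹.im = -ζ.im / ((ζ.re - x) ^ 2 + ζ.im ^ 2) := by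
  simp [Complex.inv_im, Complex.normSq_apply, sq]

lemma im_pos_of_cauchyTransform_im_neg {ζ : ℂ} (h : (cauchyTransform μ ζ).im < 0) :
    0 < ζ.im := by
  contrapose! h
  by_cases hint : Integrable (fun x : ℝ => (ζ - (x : ℂ))⁻¹) μ
  · rw [cauchyTransform, ← RCLike.im_to_complex, ← integral_im hint]
    refine integral_nonneg fun x => ?_
    rw [RCLike.im_to_complex, inv_sub_ofReal_im]
    exact div_nonneg (neg_nonneg.mpr h) (by positivity)
  · rw [cauchyTransform, integral_undef hint, Complex.zero_im]

section Finite

variable [IsFiniteMeasure μ] {ζ : ℂ}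

lemma integrable_inv_sub_ofReal (hζ : ζ.im ≠ 0) :
    Integrable (fun x : ℝ => (ζ - (x : ℂ))⁻¹) μ := by
  refine (integrable_resolvent (𝕜 := ℝ)
    (notMem_image_algebraMap_of_im_ne_zero hζ _)).neg.congr (.of_forall fun x => ?_)
  simp [resolvent, ← inv_neg]

lemma differentiableAt_cauchyTransform (hζ : ζ.im ≠ 0) :
    DifferentiableAt ℂ (cauchyTransform μ) ζ := by
  rw [cauchyTransform_eq_neg_resolventTransform]
  exact (hasDerivAt_resolventTransform ζ
    (notMem_image_algebraMap_of_im_ne_zero hζ _)).differentiableAt.neg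

lemma continuous_cauchyTransform_horizontal {ε : ℝ} (hε : ε ≠ 0) :
    Continuous fun x : ℝ => cauchyTransform μ (x + ε * Complex.I) :=
  continuous_iff_continuousAt.mpr fun x =>
    ContinuousAt.comp (f := fun x : ℝ => (x + ε * Complex.I : ℂ))
      (differentiableAt_cauchyTransform (by simpa using hε)).continuousAt (by fun_prop)

lemma cauchyTransform_re (hζ : ζ.im ≠ 0) :
    (cauchyTransform μ ζ).re = ∫ x, (ζ.re - x) / ((ζ.re - x) ^ 2 + ζ.im ^ 2) ∂μ := by
  rw [cauchyTransform, ← RCLike.re_to_complex, ← integral_re (integrable_inv_sub_ofReal hζ)]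
  simp only [RCLike.re_to_complex, inv_sub_ofReal_re]

lemma cauchyTransform_im (hζ : ζ.im ≠ 0) :
    (cauchyTransform μ ζ).im = ∫ x, -ζ.im / ((ζ.re - x) ^ 2 + ζ.im ^ 2) ∂μ := by
  rw [cauchyTransform, ← RCLike.im_to_complex, ← integral_im (integrable_inv_sub_ofReal hζ)]
  simp only [RCLike.im_to_complex, inv_sub_ofReal_im]

lemma cauchyTransform_im_nonpos (hζ : 0 < ζ.im) : (cauchyTransform μ ζ).im ≤ 0 := by
  rw [cauchyTransform_im hζ.ne']
  exact integral_nonpos fun x => div_nonpos_of_nonpos_of_nonneg (by linarith) (by positivity)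

theorem tendsto_mul_cauchyTransform (μ : Measure ℝ) [IsFiniteMeasure μ] (α : ℝ) :
    Tendsto (fun ε : ℝ => ε * Complex.I * cauchyTransform μ (α + ε * Complex.I)) (𝓝[>] 0)
      (𝓝 (μ.real {α})) := by
  have mass_eq : ((μ.real {α} : ℝ) : ℂ) = ∫ x, indicator {α} (fun _ => (1 : ℂ)) x ∂μ := by
    rw [integral_indicator_const _ (measurableSet_singleton α)]
    simp
  simp_rw [mass_eq, cauchyTransform, ← integral_const_mul]
  refine tendsto_integral_filter_of_dominated_convergence (fun _ => 1)
    (.of_forall fun ε => Measurable.aestronglyMeasurable (by fun_prop)) ?_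
    (integrable_const _) (.of_forall fun x => ?_)
  · filter_upwards [self_mem_nhdsWithin] with ε (hε : 0 < ε)
    refine .of_forall fun x => ?_
    have hle := norm_inv_sub_ofReal_le (ζ := α + ε * Complex.I) (by simpa using hε.ne') x
    calc ‖ε * Complex.I * (α + ε * Complex.I - x)⁻¹‖
        = ε * ‖(α + ε * Complex.I - x)⁻¹‖ := by simp [abs_of_pos hε]
      _ ≤ ε * ε⁻¹ := by gcongr; simpa [abs_of_pos hε] using hle
      _ = 1 := mul_inv_cancel₀ hε.ne'
  · rcases eq_or_ne x α with rfl | hx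
    · rw [indicator_of_mem (mem_singleton x)]
      refine tendsto_const_nhds.congr' ?_
      filter_upwards [self_mem_nhdsWithin] with ε (hε : 0 < ε)
      rw [add_sub_cancel_left, mul_inv_cancel₀ (by simp [hε.ne'])]
    · rw [indicator_of_notMem (by simpa using hx)]
      have hne : (α : ℂ) - x ≠ 0 := by exact_mod_cast sub_ne_zero.mpr hx.symm
      have hcont : ContinuousAt
          (fun ε : ℝ => ε * Complex.I * (α + ε * Complex.I - (x : ℂ))⁻¹) 0 :=
        ContinuousAt.mul (by fun_prop) (ContinuousAt.inv₀ (by fun_prop) (by simpa using hne))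
      simpa using hcont.tendsto.mono_left nhdsWithin_le_nhds

end Finite

end CauchyTransform

section StieltjesInversion

lemma integral_mul_poissonKernel (f : ℝ → ℝ) {ε : ℝ} (hε : 0 < ε) (t : ℝ) :
    ∫ x, f x * (ε / ((x - t) ^ 2 + ε ^ 2)) = ∫ y, f (t + ε * y) * (1 + y ^ 2)⁻¹ := by
  calc ∫ x, f x * (ε / ((x - t) ^ 2 + ε ^ 2))
      = ∫ y, f (t + y) * (ε / (y ^ 2 + ε ^ 2)) := by
        rw [← integral_add_left_eq_self _ t]
        simp only [add_sub_cancel_left]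
    _ = ε * ∫ y, f (t + ε * y) * (ε / ((ε * y) ^ 2 + ε ^ 2)) := by
        rw [Measure.integral_comp_mul_left (fun y => f (t + y) * (ε / (y ^ 2 + ε ^ 2))) ε,
          smul_eq_mul, abs_of_pos (inv_pos.2 hε), mul_inv_cancel_left₀ hε.ne']
    _ = ∫ y, f (t + ε * y) * (1 + y ^ 2)⁻¹ := by
        rw [← integral_const_mul]
        congr with y
        have : 0 < 1 + y ^ 2 := by positivity
        field_simp
        ring

variable {μ : Measure ℝ} [IsFiniteMeasure μ] {f : ℝ → ℝ}

lemma integral_mul_neg_im_cauchyTransform (hf : Integrable f) {ε : ℝ} (hε : 0 < ε) :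
    ∫ x, f x * -(cauchyTransform μ (x + ε * Complex.I)).im
      = ∫ t, (∫ y, f (t + ε * y) * (1 + y ^ 2)⁻¹) ∂μ := by
  have kernel_le (s : ℝ) : ε / (s ^ 2 + ε ^ 2) ≤ ε⁻¹ := by
    rw [div_le_iff₀ (by positivity), inv_mul_eq_div, le_div_iff₀ hε]
    nlinarith [sq_nonneg s]
  have hint : Integrable
      (Function.uncurry fun x t : ℝ => f x * (ε / ((x - t) ^ 2 + ε ^ 2)))
      (volume.prod μ) := by
    refine (hf.comp_fst μ).mul_bdd (c := ε⁻¹)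
      (Measurable.aestronglyMeasurable (by fun_prop)) (.of_forall fun q => ?_)
    rw [Real.norm_of_nonneg (by positivity)]
    exact kernel_le _
  calc ∫ x, f x * -(cauchyTransform μ (x + ε * Complex.I)).im
      = ∫ x, ∫ t, f x * (ε / ((x - t) ^ 2 + ε ^ 2)) ∂μ := by
        congr with x
        rw [cauchyTransform_im (by simpa using hε.ne'), integral_const_mul, ← integral_neg]
        simp [neg_div]
    _ = ∫ t, (∫ x, f x * (ε / ((x - t) ^ 2 + ε ^ 2))) ∂μ := integral_integral_swap hint
    _ = ∫ t, (∫ y, f (t + ε * y) * (1 + y ^ 2)⁻¹) ∂μ := by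
        simp_rw [integral_mul_poissonKernel f hε]

lemma tendsto_integral_mul_inv_one_add_sq (hf : Continuous f) {C : ℝ} (hC : ∀ x, ‖f x‖ ≤ C)
    (t : ℝ) :
    Tendsto (fun ε : ℝ => ∫ y, f (t + ε * y) * (1 + y ^ 2)⁻¹) (𝓝 0) (𝓝 (Real.pi * f t)) := by
  have limit_eq : Real.pi * f t = ∫ y : ℝ, f t * (1 + y ^ 2)⁻¹ := by
    rw [integral_const_mul, integral_univ_inv_one_add_sq, mul_comm]
  rw [limit_eq]
  refine tendsto_integral_filter_of_dominated_convergence (fun y => C * (1 + y ^ 2)⁻¹)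
    (.of_forall fun ε => Measurable.aestronglyMeasurable (by fun_prop))
    (.of_forall fun ε => .of_forall fun y => ?_)
    (integrable_inv_one_add_sq.const_mul C) (.of_forall fun y => ?_)
  · rw [norm_mul, Real.norm_of_nonneg (by positivity : 0 ≤ (1 + y ^ 2)⁻¹)]
    gcongr
    exact hC _
  · exact Continuous.tendsto' (by fun_prop) 0 _ (by simp)

theorem tendsto_integral_mul_neg_im_cauchyTransform (hf : Continuous f)
    (hsupp : HasCompactSupport f) :
    Tendsto (fun ε : ℝ => ∫ x, f x * -(cauchyTransform μ (x + ε * Complex.I)).im) (𝓝[>] 0)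
      (𝓝 (Real.pi * ∫ x, f x ∂μ)) := by
  obtain ⟨C, hC⟩ := hsupp.exists_bound_of_continuous hf
  suffices h : Tendsto (fun ε : ℝ => ∫ t, (∫ y, f (t + ε * y) * (1 + y ^ 2)⁻¹) ∂μ) (𝓝[>] 0)
      (𝓝 (∫ t, Real.pi * f t ∂μ)) by
    rw [← integral_const_mul]
    refine h.congr' ?_
    filter_upwards [self_mem_nhdsWithin] with ε hε
    exact (integral_mul_neg_im_cauchyTransform
      (hf.integrable_of_hasCompactSupport hsupp) hε).symm
  refine tendsto_integral_filter_of_dominated_convergence (fun _ => C * Real.pi)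
    (.of_forall fun ε => ?_) (.of_forall fun ε => .of_forall fun t => ?_)
    (integrable_const _) (.of_forall fun t =>
      (tendsto_integral_mul_inv_one_add_sq hf hC t).mono_left nhdsWithin_le_nhds)
  · exact (Measurable.stronglyMeasurable (by fun_prop)).integral_prod_right'
      (f := fun q : ℝ × ℝ => f (q.1 + ε * q.2) * (1 + q.2 ^ 2)⁻¹) |>.aestronglyMeasurable
  · rw [← integral_univ_inv_one_add_sq, ← integral_const_mul]
    refine norm_integral_le_of_norm_le (integrable_inv_one_add_sq.const_mul C)
      (.of_forall fun y => ?_)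
    rw [norm_mul, Real.norm_of_nonneg (by positivity : 0 ≤ (1 + y ^ 2)⁻¹)]
    gcongr
    exact hC _

theorem withDensity_eq_of_tendsto_cauchyTransform {w ρ : ℝ → ℝ≥0} (hw : Continuous w)
    (hρ : Continuous ρ)
    (hlim : ∀ᵐ x, Tendsto
      (fun ε : ℝ => w x * -(cauchyTransform μ (x + ε * Complex.I)).im) (𝓝[>] 0)
      (𝓝 (Real.pi * ρ x)))
    (hbound : ∀ K : Set ℝ, IsCompact K → ∃ C, ∀ x ∈ K, ∀ ε ∈ Ioc (0 : ℝ) 1,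
      ‖w x * -(cauchyTransform μ (x + ε * Complex.I)).im‖ ≤ C) :
    μ.withDensity (fun x => w x) = volume.withDensity (fun x => ρ x) := by
  have := IsLocallyFiniteMeasure.withDensity_coe (μ := μ) hw
  have := IsLocallyFiniteMeasure.withDensity_coe (μ := volume) hρ
  refine Measure.ext_of_integral_eq_on_compactlySupported fun f => ?_
  have stieltjes := tendsto_integral_mul_neg_im_cauchyTransform (μ := μ)
    (f := fun x => f x * w x) (f.continuous.mul (by fun_prop)) f.hasCompactSupport.mul_right
  have dominated : Tendsto
      (fun ε : ℝ => ∫ x, f x * w x * -(cauchyTransform μ (x + ε * Complex.I)).im) (𝓝[>] 0)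
      (𝓝 (∫ x, f x * (Real.pi * ρ x))) := by
    obtain ⟨C, hC⟩ := hbound _ f.hasCompactSupport.isCompact
    refine tendsto_integral_filter_of_dominated_convergence (fun x => ‖f x‖ * C) ?_ ?_
      ((f.continuous.integrable_of_hasCompactSupport f.hasCompactSupport).norm.mul_const C) ?_
    · filter_upwards [self_mem_nhdsWithin] with ε (hε : 0 < ε)
      have := continuous_cauchyTransform_horizontal (μ := μ) hε.ne'
      exact Continuous.aestronglyMeasurable (by fun_prop)
    · filter_upwards [Ioc_mem_nhdsGT one_pos] with ε hε
      refine .of_forall fun x => ?_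
      rw [mul_assoc, norm_mul]
      by_cases hx : x ∈ tsupport f
      · gcongr
        exact hC x hx ε hε
      · simp [image_eq_zero_of_notMem_tsupport hx]
    · filter_upwards [hlim] with x hx
      simpa only [mul_assoc] using hx.const_mul (f x)
  have limits_eq := tendsto_nhds_unique stieltjes dominated
  simp_rw [mul_left_comm _ Real.pi, integral_const_mul] at limits_eq
  rw [integral_withDensity_eq_integral_smul hw.measurable,
    integral_withDensity_eq_integral_smul hρ.measurable]
  simpa only [NNReal.smul_def, smul_eq_mul, mul_comm] using
    mul_left_cancel₀ Real.pi_ne_zero limits_eq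

end StieltjesInversion

lemma restrict_ne_zero_eq_withDensity_div {α : Type*} [MeasurableSpace α] {μ ν : Measure α}
    {w ρ : α → ℝ≥0} (hw : Measurable w) (hρ : Measurable ρ)
    (h : μ.withDensity (fun x => w x) = ν.withDensity (fun x => ρ x)) :
    μ.restrict {x | w x ≠ 0} = ν.withDensity (fun x => ↑(ρ x / w x)) := by
  have hsupp : MeasurableSet {x | w x ≠ 0} := (measurableSet_eq_fun hw measurable_const).compl
  have density_mul (κ : Measure α) {u : α → ℝ≥0} (hu : Measurable u) :
      (κ.withDensity fun x => u x).withDensity (fun x => ((w x)⁻¹ : ℝ≥0))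
        = κ.withDensity fun x => ((u x * (w x)⁻¹ : ℝ≥0)) := by
    simp only [ENNReal.coe_mul]
    exact (withDensity_mul _ hu.coe_nnreal_ennreal hw.inv.coe_nnreal_ennreal).symm
  calc μ.restrict {x | w x ≠ 0}
      = μ.withDensity fun x => ((w x * (w x)⁻¹ : ℝ≥0)) := by
        rw [← withDensity_indicator_one hsupp]
        congr with x
        by_cases hx : w x = 0 <;> simp [hx]
    _ = ν.withDensity fun x => ↑(ρ x / w x) := by
        simp_rw [div_eq_mul_inv, ← density_mul _ hw, h, density_mul _ hρ]

lemma tendsto_abs_of_tendsto_sub {ι : Type*} {l : Filter ι} {f g : ι → ℝ} {r : ℝ}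
    (hf : Tendsto (fun i => |f i|) l (𝓝 r)) (hfg : Tendsto (fun i => f i - g i) l (𝓝 0)) :
    Tendsto (fun i => |g i|) l (𝓝 r) := by
  refine hf.congr_dist (squeeze_zero (fun _ => dist_nonneg) (fun i => ?_) (by simpa using hfg.abs))
  exact abs_abs_sub_abs_le _ _

/- An imaginary part is determined up to sign by the square of the number, so boundary values of
`Im G` can be read off the discriminant without choosing a branch of the square root. -/
lemma abs_im_eq_sqrt (z : ℂ) : |z.im| = √((‖z ^ 2‖ - (z ^ 2).re) / 2) := by
  rw [← Real.sqrt_sq_eq_abs, norm_pow, Complex.sq_norm, Complex.normSq_apply]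
  simp [sq]

lemma norm_aeval_re_le_norm_aeval {a : ℝ[X]} (ha : a.Splits) (ζ : ℂ) :
    ‖aeval (ζ.re : ℂ) a‖ ≤ ‖aeval ζ a‖ := by
  induction ha using Submonoid.closure_induction with
  | mem q hq =>
    rcases hq with ⟨r, rfl⟩ | ⟨r, rfl⟩
    · simp
    · simpa [← Complex.ofReal_add] using Complex.abs_re_le_norm (ζ + r)
  | one => simp
  | mul p q _ _ hp hq =>
    simp only [map_mul, norm_mul]
    gcongr

/-- The Cauchy transform `G` of `μ` solves the quadratic equation `a G² + b G + c = 0` with real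
polynomial coefficients; the lower half-plane is covered by conjugation. -/
def HasQuadraticCauchyTransform (μ : Measure ℝ) (a b c : ℝ[X]) : Prop :=
  ∀ ζ : ℂ, 0 < ζ.im →
    aeval ζ a * cauchyTransform μ ζ ^ 2 + aeval ζ b * cauchyTransform μ ζ + aeval ζ c = 0

lemma tendsto_aeval_add_mul_I (q : ℝ[X]) (x : ℝ) :
    Tendsto (fun ε : ℝ => aeval (x + ε * Complex.I) q) (𝓝[>] 0) (𝓝 ((q.eval x : ℝ) : ℂ)) := by
  have : Continuous fun ε : ℝ => aeval (x + ε * Complex.I) q :=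
    q.continuous_aeval.comp (by fun_prop)
  refine (this.tendsto' 0 _ ?_).mono_left nhdsWithin_le_nhds
  simp [← Complex.coe_algebraMap, aeval_algebraMap_apply]

lemma integral_pos_of_ae_pos {α : Type*} [MeasurableSpace α] {μ : Measure α} [NeZero μ]
    {f : α → ℝ} (hf : Integrable f μ) (hpos : ∀ᵐ x ∂μ, 0 < f x) : 0 < ∫ x, f x ∂μ := by
  have hnonneg : 0 ≤ᵐ[μ] f := hpos.mono fun _ => le_of_lt
  refine (integral_nonneg_of_ae hnonneg).lt_of_ne' fun hzero => ?_
  obtain ⟨x, hx, hx0⟩ :=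
    (hpos.and ((integral_eq_zero_iff_of_nonneg_ae hnonneg hf).mp hzero)).exists
  exact hx.ne' hx0

lemma re_pos_of_tendsto_cauchyTransform {μ : Measure ℝ} [IsFiniteMeasure μ] [NeZero μ]
    {s α : ℝ} {L : ℂ} (hs : ∀ᵐ x ∂μ, 0 < s * (α - x))
    (hL : Tendsto (fun ε : ℝ => cauchyTransform μ (α + ε * Complex.I)) (𝓝[>] 0) (𝓝 L)) :
    0 < s * L.re := by
  have hre (ε : ℝ) : (α + ε * Complex.I).re = α := by simp
  have him (ε : ℝ) : (α + ε * Complex.I).im = ε := by simp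
  have hint {ε : ℝ} (hε : 0 < ε) : Integrable (fun x => s * (α - x) / ((α - x) ^ 2 + ε ^ 2)) μ := by
    simpa only [RCLike.re_to_complex, inv_sub_ofReal_re, hre, him, ← mul_div_assoc] using
      (integrable_inv_sub_ofReal (ζ := α + ε * Complex.I) (by simpa using hε.ne')).re.const_mul s
  have hpos : 0 < ∫ x, s * (α - x) / ((α - x) ^ 2 + 1 ^ 2) ∂μ :=
    integral_pos_of_ae_pos (hint one_pos) (hs.mono fun x hx => by positivity)
  refine hpos.trans_le
    (ge_of_tendsto (((Complex.continuous_re.tendsto _).comp hL).const_mul s) ?_)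
  filter_upwards [Ioc_mem_nhdsGT one_pos] with ε ⟨hε, hε1⟩
  rw [Function.comp_apply, cauchyTransform_re (by simpa using hε.ne'), hre, him,
    ← integral_const_mul]
  simp only [← mul_div_assoc]
  refine integral_mono_ae (hint one_pos) (hint hε) ?_
  filter_upwards [hs] with x hx
  gcongr

namespace HasQuadraticCauchyTransform

variable {μ : Measure ℝ} {a b c : ℝ[X]}

section Density

lemma sq_eq_discrim (h : HasQuadraticCauchyTransform μ a b c) {ζ : ℂ} (hζ : 0 < ζ.im) :
    (2 * aeval ζ a * cauchyTransform μ ζ + aeval ζ b) ^ 2 = aeval ζ (b ^ 2 - 4 * a * c) := by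
  simp only [map_sub, map_mul, map_pow, map_ofNat]
  linear_combination 4 * aeval ζ a * h ζ hζ

lemma norm_eq_sqrt_norm_discrim (h : HasQuadraticCauchyTransform μ a b c) {ζ : ℂ}
    (hζ : 0 < ζ.im) :
    ‖2 * aeval ζ a * cauchyTransform μ ζ + aeval ζ b‖ = √‖aeval ζ (b ^ 2 - 4 * a * c)‖ := by
  rw [← h.sq_eq_discrim hζ, norm_pow, Real.sqrt_sq (norm_nonneg _)]

lemma norm_aeval_mul_cauchyTransform_le (h : HasQuadraticCauchyTransform μ a b c) {ζ : ℂ}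
    (hζ : 0 < ζ.im) :
    ‖aeval ζ a * cauchyTransform μ ζ‖
      ≤ (√‖aeval ζ (b ^ 2 - 4 * a * c)‖ + ‖aeval ζ b‖) / 2 := by
  rw [← h.norm_eq_sqrt_norm_discrim hζ, le_div_iff₀' two_pos]
  calc 2 * ‖aeval ζ a * cauchyTransform μ ζ‖
      = ‖(2 * aeval ζ a * cauchyTransform μ ζ + aeval ζ b) - aeval ζ b‖ := by
        rw [add_sub_cancel_right, mul_assoc, norm_mul 2, Complex.norm_ofNat]
    _ ≤ _ := norm_sub_le _ _

lemma tendsto_abs_im (h : HasQuadraticCauchyTransform μ a b c) (x : ℝ) :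
    Tendsto (fun ε : ℝ => |(2 * aeval (x + ε * Complex.I) a *
      cauchyTransform μ (x + ε * Complex.I) + aeval (x + ε * Complex.I) b).im|) (𝓝[>] 0)
      (𝓝 √((4 * a * c - b ^ 2).eval x)) := by
  have hD := tendsto_aeval_add_mul_I (b ^ 2 - 4 * a * c) x
  have hsqrt := ((hD.norm.sub (Complex.continuous_re.tendsto _ |>.comp hD)).div_const 2).sqrt
  have limit_eq : √((‖(((b ^ 2 - 4 * a * c).eval x : ℝ) : ℂ)‖ - (b ^ 2 - 4 * a * c).eval x) / 2)
      = √((4 * a * c - b ^ 2).eval x) := by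
    rw [Complex.norm_real, Real.norm_eq_abs, ← neg_sub (b ^ 2), eval_neg]
    rcases le_total 0 ((b ^ 2 - 4 * a * c).eval x) with hx | hx
    · rw [abs_of_nonneg hx, sub_self, zero_div, Real.sqrt_zero,
        Real.sqrt_eq_zero_of_nonpos (neg_nonpos.mpr hx)]
    · rw [abs_of_nonpos hx]
      ring_nf
  rw [← limit_eq]
  refine hsqrt.congr' ?_
  filter_upwards [self_mem_nhdsWithin] with ε (hε : 0 < ε)
  rw [abs_im_eq_sqrt, h.sq_eq_discrim (by simpa using hε)]
  rfl

lemma tendsto_sub_eval_mul_cauchyTransform (h : HasQuadraticCauchyTransform μ a b c) {x : ℝ}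
    (hx : a.eval x ≠ 0) :
    Tendsto (fun ε : ℝ => 2 * aeval (x + ε * Complex.I) a *
        cauchyTransform μ (x + ε * Complex.I) + aeval (x + ε * Complex.I) b
        - 2 * (a.eval x : ℝ) * cauchyTransform μ (x + ε * Complex.I)) (𝓝[>] 0)
      (𝓝 ((b.eval x : ℝ) : ℂ)) := by
  have hx' : ((a.eval x : ℝ) : ℂ) ≠ 0 := Complex.ofReal_ne_zero.mpr hx
  have ha := tendsto_aeval_add_mul_I a x
  have hratio : Tendsto (fun ε : ℝ => (a.eval x : ℝ) / aeval (x + ε * Complex.I) a)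
      (𝓝[>] 0) (𝓝 1) := by
    simpa only [div_self hx', Pi.div_def] using
      (tendsto_const_nhds (x := ((a.eval x : ℝ) : ℂ))).div ha hx'
  have hbounded : IsBoundedUnder (· ≤ ·) (𝓝[>] 0) fun ε : ℝ =>
      ‖2 * aeval (x + ε * Complex.I) a * cauchyTransform μ (x + ε * Complex.I)
        + aeval (x + ε * Complex.I) b‖ := by
    refine Tendsto.isBoundedUnder_le
      ((tendsto_aeval_add_mul_I (b ^ 2 - 4 * a * c) x).norm.sqrt.congr' ?_)
    filter_upwards [self_mem_nhdsWithin] with ε (hε : 0 < ε)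
    rw [h.norm_eq_sqrt_norm_discrim (by simpa using hε)]
  have hsplit := (Tendsto.zero_mul_isBoundedUnder_le (by simpa using hratio.const_sub 1)
    hbounded).add (hratio.mul (tendsto_aeval_add_mul_I b x))
  rw [zero_add, one_mul] at hsplit
  refine hsplit.congr' ?_
  filter_upwards [ha.eventually_ne hx'] with ε hε
  field_simp
  ring

lemma tendsto_abs_eval_mul_neg_im [IsFiniteMeasure μ] (h : HasQuadraticCauchyTransform μ a b c)
    {x : ℝ} (hx : a.eval x ≠ 0) :
    Tendsto (fun ε : ℝ => |a.eval x| * -(cauchyTransform μ (x + ε * Complex.I)).im) (𝓝[>] 0)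
      (𝓝 (√((4 * a * c - b ^ 2).eval x) / 2)) := by
  have im_sub_tendsto := (Complex.continuous_im.tendsto _).comp
    (h.tendsto_sub_eval_mul_cauchyTransform hx)
  rw [Complex.ofReal_im] at im_sub_tendsto
  have limit := (tendsto_abs_of_tendsto_sub (h.tendsto_abs_im x) im_sub_tendsto).div_const 2
  refine limit.congr' ?_
  filter_upwards [self_mem_nhdsWithin] with ε (hε : 0 < ε)
  have him := cauchyTransform_im_nonpos (μ := μ) (ζ := x + ε * Complex.I) (by simpa using hε)
  rw [← Complex.ofReal_ofNat, ← Complex.ofReal_mul, Complex.im_ofReal_mul, abs_mul, abs_mul,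
    abs_two, abs_of_nonpos him]
  ring

/- The weight `|a|` makes the inversion uniform up to the real line, where `G` itself may blow up at
the roots of `a`. -/
theorem withDensity_norm_eval [IsFiniteMeasure μ] (h : HasQuadraticCauchyTransform μ a b c)
    (ha : a.Splits) (ha0 : a ≠ 0) :
    μ.withDensity (fun x => ‖a.eval x‖₊) =
      volume.withDensity
        (fun x => (√((4 * a * c - b ^ 2).eval x) / (2 * Real.pi)).toNNReal) := by
  refine withDensity_eq_of_tendsto_cauchyTransform (by fun_prop) (by fun_prop) ?_ ?_
  · have finite_roots : (a.rootSet ℝ).Finite := a.rootSet_finite ℝ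
    filter_upwards [finite_roots.countable.ae_notMem volume] with x hx
    have hx : a.eval x ≠ 0 := by simpa [mem_rootSet, ha0] using hx
    have limit_eq : Real.pi * (√((4 * a * c - b ^ 2).eval x) / (2 * Real.pi))
        = √((4 * a * c - b ^ 2).eval x) / 2 := by
      field_simp
    rw [Real.coe_toNNReal _ (by positivity), limit_eq]
    exact h.tendsto_abs_eval_mul_neg_im hx
  · intro K hK
    have hcont : Continuous fun q : ℝ × ℝ =>
        (√‖aeval (q.1 + q.2 * Complex.I) (b ^ 2 - 4 * a * c)‖
          + ‖aeval (q.1 + q.2 * Complex.I) b‖) / 2 := by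
      have hpoly (q : ℝ[X]) : Continuous fun r : ℝ × ℝ => aeval (r.1 + r.2 * Complex.I) q :=
        q.continuous_aeval.comp (by fun_prop)
      exact ((hpoly _).norm.sqrt.add (hpoly _).norm).div_const 2
    obtain ⟨C, hC⟩ := (hK.prod isCompact_Icc).exists_bound_of_continuousOn hcont.continuousOn
    refine ⟨C, fun x hx ε hε => ?_⟩
    set ζ : ℂ := x + ε * Complex.I
    have hre : ζ.re = x := by simp [ζ]
    calc ‖(‖a.eval x‖₊ : ℝ) * -(cauchyTransform μ ζ).im‖
        ≤ ‖aeval ζ a‖ * ‖cauchyTransform μ ζ‖ := by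
          rw [norm_mul, norm_neg, coe_nnnorm, norm_norm]
          gcongr
          · simpa [hre, ← Complex.coe_algebraMap, aeval_algebraMap_apply] using
              norm_aeval_re_le_norm_aeval ha ζ
          · exact Complex.abs_im_le_norm _
      _ = ‖aeval ζ a * cauchyTransform μ ζ‖ := (norm_mul _ _).symm
      _ ≤ _ := h.norm_aeval_mul_cauchyTransform_le (by simpa [ζ] using hε.1)
      _ ≤ C := (le_abs_self _).trans (hC (x, ε) ⟨hx, hε.1.le, hε.2⟩)

theorem restrict_eval_ne_zero [IsFiniteMeasure μ] (h : HasQuadraticCauchyTransform μ a b c)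
    (ha : a.Splits) (ha0 : a ≠ 0) :
    μ.restrict {x | a.eval x ≠ 0} = volume.withDensity
      (fun x => ENNReal.ofReal (√((4 * a * c - b ^ 2).eval x) / (2 * Real.pi * |a.eval x|))) := by
  have := restrict_ne_zero_eq_withDensity_div (w := fun x => ‖a.eval x‖₊)
    (by fun_prop) (by fun_prop) (h.withDensity_norm_eval ha ha0)
  simp only [ne_eq, nnnorm_eq_zero] at this
  rw [this]
  congr with x
  rw [← div_div _ (2 * Real.pi), ENNReal.ofReal,
    Real.toNNReal_div (x := √_ / _) (by positivity), ← Real.norm_eq_abs, norm_toNNReal]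

end Density

section Atoms

variable [IsFiniteMeasure μ] {α : ℝ} {e : ℝ[X]}

lemma measureReal_singleton_quadratic
    (h : HasQuadraticCauchyTransform μ ((X - C α) * e) b c) :
    e.eval α * μ.real {α} ^ 2 + b.eval α * μ.real {α} = 0 := by
  have hε : Tendsto (fun ε : ℝ => (ε : ℂ) * Complex.I) (𝓝[>] 0) (𝓝 0) :=
    (Continuous.tendsto' (by fun_prop) 0 _ (by simp)).mono_left nhdsWithin_le_nhds
  have hM := tendsto_mul_cauchyTransform μ α
  have lim := (((tendsto_aeval_add_mul_I e α).mul (hM.pow 2)).add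
    ((tendsto_aeval_add_mul_I b α).mul hM)).add (hε.mul (tendsto_aeval_add_mul_I c α))
  have hzero := tendsto_nhds_unique lim (tendsto_const_nhds.congr' (f₁ := fun _ => (0 : ℂ)) ?_)
  · rw [zero_mul, add_zero] at hzero
    exact_mod_cast hzero
  · filter_upwards [self_mem_nhdsWithin] with ε (hε : 0 < ε)
    have := h (α + ε * Complex.I) (by simpa using hε)
    simp only [map_mul, map_sub, aeval_X, aeval_C, Complex.coe_algebraMap,
      add_sub_cancel_left] at this
    linear_combination (-ε * Complex.I) * this

lemma tendsto_cauchyTransform (h : HasQuadraticCauchyTransform μ ((X - C α) * e) b c)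
    (hM : μ.real {α} = 0) (hb : b.eval α ≠ 0) :
    Tendsto (fun ε : ℝ => cauchyTransform μ (α + ε * Complex.I)) (𝓝[>] 0)
      (𝓝 ((-c.eval α / b.eval α : ℝ) : ℂ)) := by
  have mass := tendsto_mul_cauchyTransform μ α
  have denom := ((tendsto_aeval_add_mul_I e α).mul mass).add (tendsto_aeval_add_mul_I b α)
  rw [hM, Complex.ofReal_zero, mul_zero, zero_add] at denom
  have hb' : ((b.eval α : ℝ) : ℂ) ≠ 0 := Complex.ofReal_ne_zero.mpr hb
  have lim := ((tendsto_aeval_add_mul_I c α).neg).div denom hb'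
  push_cast
  refine lim.congr' ?_
  filter_upwards [self_mem_nhdsWithin, denom.eventually_ne hb'] with ε (hε : 0 < ε) hne
  have := h (α + ε * Complex.I) (by simpa using hε)
  simp only [map_mul, map_sub, aeval_X, aeval_C, Complex.coe_algebraMap,
    add_sub_cancel_left] at this
  rw [Pi.div_apply, div_eq_iff hne]
  linear_combination -this

theorem measureReal_singleton_eq_max [NeZero μ]
    (h : HasQuadraticCauchyTransform μ ((X - C α) * e) b c) (he : e.eval α ≠ 0)
    (hc : c.eval α ≤ 0) (hsupp : ∀ᵐ x ∂μ, 0 ≤ e.eval α * (α - x)) :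
    μ.real {α} = max (-b.eval α / e.eval α) 0 := by
  rcases eq_or_ne (μ.real {α}) 0 with hM | hM
  · rw [hM, eq_comm, max_eq_right_iff]
    by_contra! hpos
    -- Without an atom, `G(α + iε)` tends to `-c(α) / b(α)`, which would have the wrong sign.
    have hb : b.eval α ≠ 0 := fun hb => by simp [hb] at hpos
    have hne : ∀ᵐ x ∂μ, x ∈ ({α} : Set ℝ)ᶜ :=
      compl_mem_ae_iff.mpr ((measureReal_eq_zero_iff).mp hM)
    have hs : ∀ᵐ x ∂μ, 0 < e.eval α * (α - x) := by
      filter_upwards [hsupp, hne] with x hx hxα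
      exact hx.lt_of_ne' (mul_ne_zero he (sub_ne_zero.mpr (Ne.symm hxα)))
    have hre := re_pos_of_tendsto_cauchyTransform hs (h.tendsto_cauchyTransform hM hb)
    have hprod : e.eval α * (-c.eval α / b.eval α) * (-b.eval α / e.eval α) = c.eval α := by
      field_simp
    rw [Complex.ofReal_re] at hre
    exact hc.not_gt (hprod ▸ mul_pos hre hpos)
  · have hroot : e.eval α * μ.real {α} + b.eval α = 0 :=
      (mul_eq_zero_iff_left hM).mp (by linear_combination h.measureReal_singleton_quadratic)
    have hM_eq : μ.real {α} = -b.eval α / e.eval α := by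
      rw [eq_div_iff he]
      linear_combination hroot
    rw [← hM_eq, max_eq_left measureReal_nonneg]

end Atoms

end HasQuadraticCauchyTransform

section FreeBinomial

variable {σ θ : ℝ}

lemma xminus_nonneg (σ θ : ℝ) : 0 ≤ xminus σ θ := sq_nonneg _

lemma xminus_le_xplus (σ θ : ℝ) : xminus σ θ ≤ xplus σ θ := by
  rw [xminus, xplus]
  nlinarith [mul_nonneg (Real.sqrt_nonneg (σ / (σ + θ) * (1 - 1 / (σ + θ))))
    (Real.sqrt_nonneg (1 / (σ + θ) * (1 - σ / (σ + θ))))]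

lemma sqrt_mul_le_half_add {a b : ℝ} (ha : 0 ≤ a) (hb : 0 ≤ b) : √(a * b) ≤ (a + b) / 2 := by
  lift a to ℝ≥0 using ha
  lift b to ℝ≥0 using hb
  simpa [Real.sqrt_mul] using NNReal.coe_le_coe.mpr (NNReal.sqrt_mul_le_half_add a b)

lemma xplus_le_one (hσ : 0 < σ) (hθ : 0 < θ) (hσθ : 1 ≤ σ + θ) : xplus σ θ ≤ 1 := by
  have hs : σ / (σ + θ) ≤ 1 := div_le_one_of_le₀ (by linarith) (by linarith)
  have ht : 1 / (σ + θ) ≤ 1 := div_le_one_of_le₀ hσθ (by linarith)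
  rw [xplus, sq_le_one_iff₀ (by positivity)]
  calc √(σ / (σ + θ) * (1 - 1 / (σ + θ))) + √(1 / (σ + θ) * (1 - σ / (σ + θ)))
      ≤ (σ / (σ + θ) + (1 - 1 / (σ + θ))) / 2 + (1 / (σ + θ) + (1 - σ / (σ + θ))) / 2 := by
        gcongr
        · exact sqrt_mul_le_half_add (by positivity) (by linarith)
        · exact sqrt_mul_le_half_add (by positivity) (by linarith)
    _ = 1 := by ring

lemma sq_mul_sub_xminus_mul_xplus_sub (hσ : 0 < σ) (hθ : 0 < θ) (hσθ : 1 ≤ σ + θ) (x : ℝ) :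
    (σ + θ) ^ 2 * ((x - xminus σ θ) * (xplus σ θ - x))
      = 4 * (x * (x - 1)) * (1 - σ - θ) - ((σ + θ - 2) * x + (1 - σ)) ^ 2 := by
  have hs : 0 ≤ 1 - σ / (σ + θ) :=
    sub_nonneg.mpr (div_le_one_of_le₀ (by linarith) (by linarith))
  have ht : 0 ≤ 1 - 1 / (σ + θ) := sub_nonneg.mpr (div_le_one_of_le₀ hσθ (by linarith))
  have hu := Real.sq_sqrt (mul_nonneg (by positivity : 0 ≤ σ / (σ + θ)) ht)
  have hv := Real.sq_sqrt (mul_nonneg (by positivity : 0 ≤ 1 / (σ + θ)) hs)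
  rw [xminus, xplus]
  set u := √(σ / (σ + θ) * (1 - 1 / (σ + θ)))
  set v := √(1 / (σ + θ) * (1 - σ / (σ + θ)))
  calc (σ + θ) ^ 2 * ((x - (u - v) ^ 2) * ((u + v) ^ 2 - x))
      = (σ + θ) ^ 2 * (2 * (u ^ 2 + v ^ 2) * x - x ^ 2 - (u ^ 2 - v ^ 2) ^ 2) := by ring
    _ = _ := by
      rw [hu, hv]
      field_simp
      ring

/-- The Cauchy transform of `μ` is a root of the quadratic whose roots are the two branches of
`((σ+θ-2)z + 1-σ ± √(((σ+θ-2)z + 1-σ)² - 4(1-σ-θ)z(z-1))) / (2z(1-z))`, one of which is the Cauchy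
transform of `β(σ,θ)`. -/
def HasFreeBinomialCauchyTransform (μ : Measure ℝ) (σ θ : ℝ) : Prop :=
  HasQuadraticCauchyTransform μ (X * (X - 1)) (C (σ + θ - 2) * X + C (1 - σ)) (C (1 - σ - θ))

lemma freeBinomial_density_eq (hσ : 0 < σ) (hθ : 0 < θ) (hσθ : 1 ≤ σ + θ) (x : ℝ) :
    √((4 * (X * (X - 1)) * C (1 - σ - θ) - (C (σ + θ - 2) * X + C (1 - σ)) ^ 2).eval x) /
        (2 * Real.pi * |(X * (X - 1) : ℝ[X]).eval x|)
      = indicator (Ioo (xminus σ θ) (xplus σ θ))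
        (fun x => (σ + θ) * √((x - xminus σ θ) * (xplus σ θ - x)) /
          (2 * Real.pi * x * (1 - x))) x := by
  have discrim_eq : (4 * (X * (X - 1)) * C (1 - σ - θ)
        - (C (σ + θ - 2) * X + C (1 - σ)) ^ 2 : ℝ[X]).eval x
      = (σ + θ) ^ 2 * ((x - xminus σ θ) * (xplus σ θ - x)) := by
    rw [sq_mul_sub_xminus_mul_xplus_sub hσ hθ hσθ]
    simp
  rw [discrim_eq, Real.sqrt_mul (sq_nonneg _), Real.sqrt_sq (by positivity)]
  by_cases hx : x ∈ Ioo (xminus σ θ) (xplus σ θ)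
  · have hx0 : 0 < x := (xminus_nonneg σ θ).trans_lt hx.1
    have hx1 : x < 1 := hx.2.trans_le (xplus_le_one hσ hθ hσθ)
    have habs : |(X * (X - 1) : ℝ[X]).eval x| = x * (1 - x) := by
      rw [eval_mul, eval_sub, eval_X, eval_one, abs_mul, abs_of_pos hx0, abs_sub_comm,
        abs_of_pos (sub_pos.mpr hx1)]
    rw [indicator_of_mem hx, habs, ← mul_assoc]
  · rw [indicator_of_notMem hx]
    have : √((x - xminus σ θ) * (xplus σ θ - x)) = 0 := by
      refine Real.sqrt_eq_zero_of_nonpos ?_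
      have := xminus_le_xplus σ θ
      contrapose! hx
      rcases mul_pos_iff.mp hx with h | h
      · exact ⟨by linarith, by linarith⟩
      · exact ⟨by linarith, by linarith⟩
    rw [this, mul_zero, zero_div]

variable {μ : Measure ℝ} [IsFiniteMeasure μ]

namespace HasFreeBinomialCauchyTransform

lemma restrict_eq (h : HasFreeBinomialCauchyTransform μ σ θ) (hσ : 0 < σ) (hθ : 0 < θ)
    (hσθ : 1 ≤ σ + θ) :
    μ.restrict {0, 1}ᶜ = volume.withDensity (fun x =>
      ENNReal.ofReal (indicator (Ioo (xminus σ θ) (xplus σ θ))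
        (fun x => (σ + θ) * √((x - xminus σ θ) * (xplus σ θ - x)) /
          (2 * Real.pi * x * (1 - x))) x)) := by
  have splits : (X * (X - 1) : ℝ[X]).Splits :=
    Splits.X.mul (by simpa using Splits.X_sub_C (1 : ℝ))
  have ne_zero : (X * (X - 1) : ℝ[X]) ≠ 0 :=
    mul_ne_zero X_ne_zero (by simpa using X_sub_C_ne_zero (1 : ℝ))
  have hset : ({0, 1}ᶜ : Set ℝ) = {x | (X * (X - 1) : ℝ[X]).eval x ≠ 0} := by
    ext x
    simp [sub_eq_zero]
  simp_rw [hset, HasQuadraticCauchyTransform.restrict_eval_ne_zero h splits ne_zero,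
    freeBinomial_density_eq hσ hθ hσθ]

lemma ae_mem_Icc (h : HasFreeBinomialCauchyTransform μ σ θ) (hσ : 0 < σ) (hθ : 0 < θ)
    (hσθ : 1 ≤ σ + θ) : ∀ᵐ x ∂μ, x ∈ Icc 0 1 := by
  have hac : ∀ᵐ x ∂μ.restrict {0, 1}ᶜ, x ∈ Icc (0 : ℝ) 1 := by
    rw [h.restrict_eq hσ hθ hσθ, ae_withDensity_iff (by measurability)]
    refine .of_forall fun x hx => ?_
    have : x ∈ Ioo (xminus σ θ) (xplus σ θ) := by
      by_contra hx'
      simp [hx'] at hx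
    exact ⟨(xminus_nonneg σ θ).trans this.1.le, this.2.le.trans (xplus_le_one hσ hθ hσθ)⟩
  rw [ae_restrict_iff' (by measurability)] at hac
  filter_upwards [hac] with x hx
  by_cases hx' : x ∈ ({0, 1} : Set ℝ)
  · rcases hx' with rfl | rfl <;> simp
  · exact hx hx'

variable [NeZero μ]

lemma measureReal_singleton_zero (h : HasFreeBinomialCauchyTransform μ σ θ) (hσ : 0 < σ)
    (hθ : 0 < θ) (hσθ : 1 ≤ σ + θ) : μ.real {0} = max (1 - σ) 0 := by
  have hfactor : HasQuadraticCauchyTransform μ ((X - C 0) * (X - 1))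
      (C (σ + θ - 2) * X + C (1 - σ)) (C (1 - σ - θ)) := by
    rw [C_0, sub_zero]
    exact h
  rw [hfactor.measureReal_singleton_eq_max (by simp) (by simpa using by linarith)
    ((h.ae_mem_Icc hσ hθ hσθ).mono fun x hx => by simpa using hx.1)]
  simp [div_neg]

lemma measureReal_singleton_one (h : HasFreeBinomialCauchyTransform μ σ θ) (hσ : 0 < σ)
    (hθ : 0 < θ) (hσθ : 1 ≤ σ + θ) : μ.real {1} = max (1 - θ) 0 := by
  have hfactor : HasQuadraticCauchyTransform μ ((X - C 1) * X)
      (C (σ + θ - 2) * X + C (1 - σ)) (C (1 - σ - θ)) := by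
    rw [C_1, mul_comm]
    exact h
  rw [hfactor.measureReal_singleton_eq_max (by simp) (by simpa using by linarith)
    ((h.ae_mem_Icc hσ hθ hσθ).mono fun x hx => by simpa using hx.2)]
  simp only [eval_add, eval_mul, eval_C, eval_X]
  ring_nf

theorem eq_freeBinomial (h : HasFreeBinomialCauchyTransform μ σ θ) (hσ : 0 < σ) (hθ : 0 < θ)
    (hσθ : 1 ≤ σ + θ) : μ = freeBinomial σ θ := by
  have weight_eq {s : ℝ} (hs : 0 < s) :
      (if 0 < s ∧ s < 1 then ENNReal.ofReal (1 - s) else 0) = ENNReal.ofReal (max (1 - s) 0) := by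
    rcases lt_or_ge s 1 with h1 | h1
    · rw [if_pos ⟨hs, h1⟩, max_eq_left (by linarith)]
    · rw [if_neg (by simp [h1]), max_eq_right (by linarith), ENNReal.ofReal_zero]
  rw [freeBinomial, weight_eq hσ, weight_eq hθ, ← h.restrict_eq hσ hθ hσθ,
    ← h.measureReal_singleton_zero hσ hθ hσθ, ← h.measureReal_singleton_one hσ hθ hσθ,
    ofReal_measureReal, ofReal_measureReal, ← Measure.restrict_singleton,
    ← Measure.restrict_singleton, ← Measure.restrict_union (by simp) (by simp), singleton_union,
    Measure.restrict_add_restrict_compl (by measurability)]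

end HasFreeBinomialCauchyTransform

end FreeBinomial

lemma eqOn_zero_of_not_countable_zeros {f : ℂ → ℂ} {U : Set ℂ} (hf : AnalyticOnNhd ℂ f U)
    (hU : IsPreconnected U) (hzeros : ¬(f ⁻¹' {0} ∩ U).Countable) : EqOn f 0 U := by
  refine (hf.eqOn_zero_or_eventually_ne_zero_of_preconnected hU).resolve_right fun hne => hzeros ?_
  exact (HereditarilyLindelofSpace.isLindelof _).countable_of_isDiscrete
    (isDiscrete_of_codiscreteWithin (s := f ⁻¹' {0}) hne)

section RTransform

/-- `r` is an r-transform of `μ`: `ζ = r z + z⁻¹` solves `G_μ(ζ) = z` for all small `z ≠ 0`.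
With this encoding, `r₁ + r₂` is an r-transform of `μ₁ ⊞ μ₂`, so `t * r` is one of `μ^{⊞ t}`. -/
def IsRTransform (r : ℂ → ℂ) (μ : Measure ℝ) : Prop :=
  ∀ᶠ z in 𝓝[≠] 0, cauchyTransform μ (r z + z⁻¹) = z

lemma IsRTransform.ne_zero {r : ℂ → ℂ} {μ : Measure ℝ} (h : IsRTransform r μ) : μ ≠ 0 := by
  rintro rfl
  obtain ⟨z, hz, hz0⟩ := (h.and self_mem_nhdsWithin).exists
  rw [cauchyTransform, integral_zero_measure] at hz
  exact hz0 hz.symm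

/-- The two-point distribution `p δ₀ + (1 - p) δ_s`. -/
noncomputable def twoPointMeasure (p s : ℝ) : Measure ℝ :=
  ENNReal.ofReal p • Measure.dirac 0 + ENNReal.ofReal (1 - p) • Measure.dirac s

variable {p s t : ℝ} {r : ℂ → ℂ} {μ : Measure ℝ}

lemma cauchyTransform_twoPointMeasure (hp : 0 ≤ p) (hp1 : p ≤ 1) (w : ℂ) :
    cauchyTransform (twoPointMeasure p s) w = p * w⁻¹ + (1 - p) * (w - s)⁻¹ := by
  rw [cauchyTransform, twoPointMeasure, integral_add_measure, integral_smul_measure,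
    integral_smul_measure, integral_dirac, integral_dirac, ENNReal.toReal_ofReal hp,
    ENNReal.toReal_ofReal (sub_nonneg.mpr hp1)]
  · simp
  · exact (integrable_dirac (by simp)).smul_measure ENNReal.ofReal_ne_top
  · exact (integrable_dirac (by simp)).smul_measure ENNReal.ofReal_ne_top

lemma mul_sub_eq_of_cauchyTransform_twoPointMeasure_eq (hp : 0 ≤ p) (hp1 : p ≤ 1) {w z : ℂ}
    (hw : w.im ≠ 0) (h : cauchyTransform (twoPointMeasure p s) w = z) :
    z * (w * (w - s)) = w - p * s := by
  have hw0 : w ≠ 0 := by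
    rintro rfl
    exact hw Complex.zero_im
  have hws : w - s ≠ 0 := fun hws => hw (by rw [sub_eq_zero.mp hws, Complex.ofReal_im])
  rw [← h, cauchyTransform_twoPointMeasure hp hp1]
  field_simp
  ring

lemma quadratic_eq_zero_of_cauchyTransform_twoPointMeasure_eq (hp : 0 ≤ p) (hp1 : p ≤ 1)
    (ht : t ≠ 0) {z R : ℂ} (hz : z.im < 0)
    (h : cauchyTransform (twoPointMeasure p t⁻¹) (R + z⁻¹) = z) :
    (t * R + z⁻¹) * (t * R + z⁻¹ - 1) * z ^ 2 +
      ((t - 2) * (t * R + z⁻¹) + (1 - t * (1 - p))) * z + (1 - t) = 0 := by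
  have hw : 0 < (R + z⁻¹).im := im_pos_of_cauchyTransform_im_neg (h ▸ hz)
  have curve := mul_sub_eq_of_cauchyTransform_twoPointMeasure_eq hp hp1 hw.ne' h
  have hz0 : z ≠ 0 := by
    rintro rfl
    exact hz.ne Complex.zero_im
  have ht' : (t : ℂ) ≠ 0 := Complex.ofReal_ne_zero.mpr ht
  push_cast at curve
  field_simp at curve ⊢
  linear_combination t * curve

lemma tendsto_neg_mul_I : Tendsto (fun y : ℝ => -(y * Complex.I)) (𝓝[>] 0) (𝓝[≠] 0) := by
  refine tendsto_nhdsWithin_iff.mpr ⟨?_, ?_⟩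
  · exact (Continuous.tendsto' (by fun_prop) 0 _ (by simp)).mono_left nhdsWithin_le_nhds
  · filter_upwards [self_mem_nhdsWithin] with y (hy : 0 < y)
    simp [hy.ne']

lemma not_countable_setOf_of_eventually {P : ℝ → Prop} (h : ∀ᶠ y in 𝓝[>] 0, P y) :
    ¬{y | P y}.Countable := by
  obtain ⟨δ, hδ, hsub⟩ := mem_nhdsGT_iff_exists_Ioo_subset.mp h
  exact fun hP => (Cardinal.Real.Ioo_countable_iff.mp (hP.mono hsub)).not_gt hδ

theorem IsRTransform.hasFreeBinomialCauchyTransform [IsFiniteMeasure μ] (hp : 0 ≤ p)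
    (hp1 : p ≤ 1) (ht : t ≠ 0) (hr : IsRTransform r (twoPointMeasure p t⁻¹))
    (hμ : IsRTransform (fun z => t * r z) μ) :
    HasFreeBinomialCauchyTransform μ (t * (1 - p)) (t * p) := by
  let F (ζ : ℂ) : ℂ := ζ * (ζ - 1) * cauchyTransform μ ζ ^ 2 +
    ((t - 2) * ζ + (1 - t * (1 - p))) * cauchyTransform μ ζ + (1 - t)
  let H : Set ℂ := {ζ | 0 < ζ.im}
  have hF : AnalyticOnNhd ℂ F H := by
    refine DifferentiableOn.analyticOnNhd (fun ζ hζ => DifferentiableAt.differentiableWithinAt ?_)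
      (isOpen_lt continuous_const Complex.continuous_im)
    have := differentiableAt_cauchyTransform (μ := μ) (ne_of_gt hζ)
    fun_prop
  have hzeros : ¬(F ⁻¹' {0} ∩ H).Countable := by
    have himage : ∀ᶠ y : ℝ in 𝓝[>] 0,
        -(y * Complex.I) ∈ cauchyTransform μ '' (F ⁻¹' {0} ∩ H) := by
      filter_upwards [tendsto_neg_mul_I.eventually hr, tendsto_neg_mul_I.eventually hμ,
        self_mem_nhdsWithin] with y hry hμy (hy : 0 < y)
      have him : (-(y * Complex.I)).im < 0 := by simpa using hy
      refine ⟨_, ⟨?_, im_pos_of_cauchyTransform_im_neg (hμy ▸ him)⟩, hμy⟩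
      simp only [F, mem_preimage, mem_singleton_iff, hμy]
      exact quadratic_eq_zero_of_cauchyTransform_twoPointMeasure_eq hp hp1 ht him hry
    have hinj : Function.Injective fun y : ℝ => -(y * Complex.I) := fun x y hxy => by
      simpa using hxy
    exact fun hcount => not_countable_setOf_of_eventually himage
      ((hcount.image _).preimage hinj)
  intro ζ hζ
  have := eqOn_zero_of_not_countable_zeros hF (convex_halfSpace_im_gt 0).isPreconnected hzeros hζ
  simp only [F, Pi.zero_apply] at this
  simp only [map_mul, map_sub, map_add, map_one, map_ofNat, aeval_X, aeval_C,
    Complex.coe_algebraMap]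
  linear_combination this

end RTransform

theorem freeConvolution_bernoulli_eq_freeBinomial_general {t p : ℝ} (ht : 1 ≤ t) (hp : 0 < p)
    (hp1 : p < 1) {μ : Measure ℝ} [IsFiniteMeasure μ] {r : ℂ → ℂ}
    (hr : IsRTransform r (twoPointMeasure p t⁻¹)) (hμ : IsRTransform (fun z => t * r z) μ) :
    μ = freeBinomial (t * (1 - p)) (t * p) := by
  have ht0 : 0 < t := one_pos.trans_le ht
  have : NeZero μ := ⟨hμ.ne_zero⟩
  exact (hr.hasFreeBinomialCauchyTransform hp.le hp1.le ht0.ne' hμ).eq_freeBinomial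
    (mul_pos ht0 (sub_pos.mpr hp1)) (mul_pos ht0 hp) (by linarith)

/-- The `n`-fold free convolution of `p δ₀ + (1-p) δ_{1/n}` is free-binomial `β(n(1-p), np)`.
Free convolution is encoded through r-transforms: `rν` is an r-transform of
`ν = p δ₀ + (1-p) δ_{1/n}` (i.e. `G_ν(rν(z) + 1/z) = z` near `0`), and `μ` is the measure whose
r-transform is `n · rν`. -/
theorem freeConvolution_bernoulli_eq_freeBinomial (n : ℕ) (hn : 2 ≤ n)
    (p : ℝ) (hp : 0 < p) (hp1 : p < 1)
    (μ : Measure ℝ) [IsProbabilityMeasure μ] (rν : ℂ → ℂ)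
    (hrν : ∀ᶠ z in nhdsWithin (0 : ℂ) {z | z ≠ 0},
      ∫ x, (rν z + z⁻¹ - (x : ℂ))⁻¹
        ∂(ENNReal.ofReal p • Measure.dirac (0 : ℝ) +
          ENNReal.ofReal (1 - p) • Measure.dirac ((n : ℝ)⁻¹)) = z)
    (hrμ : ∀ᶠ z in nhdsWithin (0 : ℂ) {z | z ≠ 0},
      ∫ x, ((n : ℂ) * rν z + z⁻¹ - (x : ℂ))⁻¹ ∂μ = z) :
    μ = freeBinomial (n * (1 - p)) (n * p) :=
  freeConvolution_bernoulli_eq_freeBinomial_general (by exact_mod_cast one_le_two.trans hn) hp hp1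
    hrν (by rw [IsRTransform]; exact_mod_cast hrμ)
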